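/- Let (G,T) be a bipartite graft, r ∈ V(G), and F a minimum join of (G,T). Let K be a decapital distance component of (G,T) with respect to r. Then all allowed edges in the edge cut δ_G(K) are contained in the same factor-component of (G,T). -/

import Mathlib

/-!
The heart of the proof is Sebő's theorem that every minimum join `F'` has at most one edge in the
cut `δ_G(K)` of a decapital distance component `K` (`decap_cut`).

Given this, let `e₁ ∈ F₁` and `e₂ ∈ F₂` be allowed edges of `δ_G(K)`, with `F₁`, `F₂` minimum
joins, and let `S` be the factor-component of `e₁`. Edges of minimum joins do not leave `S`, so
`F₁` meets the cut of `K ∩ S` in `e₁` only, and `F₂` meets it at most in `e₂`. Joins of the same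
set meet a given cut in numbers of the same parity, so `F₂` does contain an edge of that cut: it is
`e₂`, and therefore `e₂` lies in `S`.

To prove `decap_cut`, write `dist_F(r, v) = ν(T Δ {r, v}) - ν(T)` (`isPot_dist`). This makes the
distance, up to a constant, the function `g v = ν(R Δ {v})` with `R = T Δ {r}`; it depends neither
on `F` nor, except through `R`, on `r`, and minimum joins of `T` are just those realising `g r`.
More generally let only the edges of a set `E` have cost one, the others being free, and let `g v`
be the minimum cost of a join of `R Δ {v}` (`IsPot`); bipartiteness is used only in the form that
every even edge set has even cost. In a level component `K` take a set `A` of points where `g`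
attains its minimum over `K`, connected by free edges and maximal as such. By an exchange argument
(`cut_estimate`), a join with `n` edges in the cut of `A` costs at least `g v + n` if `v ∈ A`, and
at least `g v + n - 1` if `v ∉ A`. If `A = K`, a minimum join ending outside `K` therefore has at
most one edge in the cut of `K`. Otherwise the cut of `A` is made free: by the same estimates this
lowers `g` by one outside `A` and leaves it unchanged on `A` (`pot_contract`), so that `K` is still
a level component, a join that was minimum and ends outside `A` stays minimum, and induction on the
number of costed edges applies (`level_cut`). Making the cut of `A` free plays the role of
contracting `A` together with its neighbours.
-/


namespace TightCuts

open SimpleGraph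

variable {V : Type*}

/-- `(G, T)` is a graft: every connected component of `G` contains an even
number of vertices of `T`. -/
def IsGraft (G : SimpleGraph V) (T : Set V) : Prop :=
  ∀ c : G.ConnectedComponent, Even ((T ∩ {v | G.connectedComponentMk v = c}).ncard)

/-- `F` is a join of the graft `(G, T)`: a set of edges such that a vertex is
incident with an odd number of edges of `F` exactly when it lies in `T`. -/
def IsJoin (G : SimpleGraph V) (T : Set V) (F : Set (Sym2 V)) : Prop :=
  F ⊆ G.edgeSet ∧ ∀ v : V, (Odd ({e ∈ F | v ∈ e}).ncard ↔ v ∈ T)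

/-- `ν(G, T)`: the minimum size of a join of `(G, T)`. -/
noncomputable def nu (G : SimpleGraph V) (T : Set V) : ℕ :=
  sInf {n | ∃ F : Set (Sym2 V), IsJoin G T F ∧ F.ncard = n}

/-- `F` is a minimum join of `(G, T)`. -/
def IsMinJoin (G : SimpleGraph V) (T : Set V) (F : Set (Sym2 V)) : Prop :=
  IsJoin G T F ∧ F.ncard = nu G T

open Classical in
/-- The `F`-weight of an edge: `-1` if the edge lies in `F`, `+1` otherwise. -/
noncomputable def edgeWt (F : Set (Sym2 V)) (e : Sym2 V) : ℤ :=
  if e ∈ F then -1 else 1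

/-- The `F`-weight of a walk: the sum of the `F`-weights of its edges. -/
noncomputable def walkWt (F : Set (Sym2 V)) {G : SimpleGraph V} {x y : V}
    (p : G.Walk x y) : ℤ :=
  (p.edges.map (edgeWt F)).sum

/-- The `F`-distance between `x` and `y`: the minimum `F`-weight of a path
between `x` and `y`. -/
noncomputable def distF (G : SimpleGraph V) (F : Set (Sym2 V)) (x y : V) : ℤ :=
  sInf {n : ℤ | ∃ p : G.Walk x y, p.IsPath ∧ walkWt F p = n}

/-- `K` is (the vertex set of) a connected component of the subgraph of `G`
induced by `U`. -/
def IsComponentOf (G : SimpleGraph V) (U K : Set V) : Prop :=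
  K.Nonempty ∧ K ⊆ U ∧ (G.induce K).Connected ∧
    ∀ x ∈ K, ∀ y ∈ U, G.Adj x y → y ∈ K

/-- `K` is a distance component of the graft with respect to root `r` at level `i`
(with respect to a minimum join `F`): `i` is attained as an `F`-distance from `r`,
and `K` is a connected component of the subgraph induced by the vertices at
`F`-distance at most `i` from `r`. -/
def IsDistCompAt (G : SimpleGraph V) (F : Set (Sym2 V)) (r : V) (i : ℤ) (K : Set V) : Prop :=
  (∃ x, distF G F r x = i) ∧ IsComponentOf G {x | distF G F r x ≤ i} K

/-- `K` is a decapital distance component with respect to root `r`: a distance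
component (at some level) not containing `r`. -/
def IsDecapDistComp (G : SimpleGraph V) (F : Set (Sym2 V)) (r : V) (K : Set V) : Prop :=
  ∃ i : ℤ, IsDistCompAt G F r i K ∧ r ∉ K

/-- The edge cut `δ_G(K)`: edges of `G` with exactly one end in `K`. -/
def cutEdges (G : SimpleGraph V) (K : Set V) : Set (Sym2 V) :=
  {e | e ∈ G.edgeSet ∧ ∃ x y, e = s(x, y) ∧ x ∈ K ∧ y ∉ K}

/-- An edge is allowed in `(G, T)` if some minimum join contains it. -/
def Allowed (G : SimpleGraph V) (T : Set V) (e : Sym2 V) : Prop :=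
  ∃ F, IsMinJoin G T F ∧ e ∈ F

/-- Two vertices are factor-connected if there is a walk between them all of
whose edges are allowed. -/
def FactorConnected (G : SimpleGraph V) (T : Set V) (u v : V) : Prop :=
  ∃ p : G.Walk u v, ∀ e ∈ p.edges, Allowed G T e

/-- `C` is (the vertex set of) a factor-component of `(G, T)`: an equivalence
class of factor-connectivity. -/
def IsFactorComponent (G : SimpleGraph V) (T : Set V) (C : Set V) : Prop :=
  ∃ v, C = {u | FactorConnected G T u v}

/-- The Kotzig–Lovász relation: `u ∼ v` iff `u = v`, or `u` and `v` are
factor-connected (hence in the same factor-component) and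
`ν(G, T) = ν(G, T Δ {u, v})`. -/
def klRel (G : SimpleGraph V) (T : Set V) (u v : V) : Prop :=
  u = v ∨ (FactorConnected G T u v ∧ nu G T = nu G (symmDiff T {u, v}))

/-- `S` is a Kotzig–Lovász class of `(G, T)`. -/
def IsKLClass (G : SimpleGraph V) (T : Set V) (S : Set V) : Prop :=
  ∃ v, S = {u | klRel G T u v}

/-- `A(K)` for a distance component `K` at level `i`: the vertices of `K` at
`F`-distance exactly `i` from `r`. -/
def AK (G : SimpleGraph V) (F : Set (Sym2 V)) (r : V) (i : ℤ) (K : Set V) : Set V :=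
  K ∩ {x | distF G F r x = i}

/-- `D(K) = V(K) \ A(K)`. -/
def DK (G : SimpleGraph V) (F : Set (Sym2 V)) (r : V) (i : ℤ) (K : Set V) : Set V :=
  K \ AK G F r i K

/-- `S` is the root class of `K`: a Kotzig–Lovász class containing all ends in
`K` of allowed edges of the cut `δ_G(K)`. -/
def IsRootClass (G : SimpleGraph V) (T : Set V) (K S : Set V) : Prop :=
  IsKLClass G T S ∧ ∀ e ∈ cutEdges G K, Allowed G T e → ∀ u ∈ e, u ∈ K → u ∈ S

/-- `S` is the antiroot class of `K`: a Kotzig–Lovász class containing all ends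
outside `K` of allowed edges of the cut `δ_G(K)`. -/
def IsAntirootClass (G : SimpleGraph V) (T : Set V) (K S : Set V) : Prop :=
  IsKLClass G T S ∧ ∀ e ∈ cutEdges G K, Allowed G T e → ∀ u ∈ e, u ∉ K → u ∈ S

/-- The family `𝒜(K)`: the root fragment `K ∩ S_K` together with all
Kotzig–Lovász classes other than `S_K` that contain a vertex of `A(K)`. -/
def famA (G : SimpleGraph V) (T : Set V) (F : Set (Sym2 V)) (r : V) (i : ℤ)
    (K S_K : Set V) : Set (Set V) :=
  insert (K ∩ S_K) {S | IsKLClass G T S ∧ S ≠ S_K ∧ (S ∩ AK G F r i K).Nonempty}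

/-- `L` is adjacent to a vertex of `S` by an allowed edge. -/
def AdjAllowed (G : SimpleGraph V) (T : Set V) (L S : Set V) : Prop :=
  ∃ x ∈ L, ∃ s ∈ S, G.Adj x s ∧ Allowed G T s(x, s)

/-- `𝒩_K(S)`: the family of connected components of `G[D(K)]` adjacent to a
vertex of `S` by an allowed edge. -/
def NKfam (G : SimpleGraph V) (T : Set V) (F : Set (Sym2 V)) (r : V) (i : ℤ)
    (K S : Set V) : Set (Set V) :=
  {L | IsComponentOf G (DK G F r i K) L ∧ AdjAllowed G T L S}

/-- `U_K(S)`: the union of the vertex sets of the members of `𝒩_K(S)`. -/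
def UK (G : SimpleGraph V) (T : Set V) (F : Set (Sym2 V)) (r : V) (i : ℤ)
    (K S : Set V) : Set V :=
  ⋃₀ NKfam G T F r i K S

/-- `X` is an `F`-negative set for `S`: `X` is disjoint from `S` and every
`x ∈ X` admits a path of negative `F`-weight from `x` to a vertex of `S` whose
vertices, except the end in `S`, all lie in `X`. -/
def IsNegSet (G : SimpleGraph V) (F : Set (Sym2 V)) (S X : Set V) : Prop :=
  X ⊆ Sᶜ ∧ ∀ x ∈ X, ∃ y ∈ S, ∃ p : G.Walk x y, p.IsPath ∧ walkWt F p < 0 ∧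
    ∀ v ∈ p.support, v ≠ y → v ∈ X

/-- The maximum `F`-negative set for `S`: the union of all `F`-negative sets
for `S`. -/
def maxNegSet (G : SimpleGraph V) (F : Set (Sym2 V)) (S : Set V) : Set V :=
  ⋃₀ {X | IsNegSet G F S X}

/-- The maximum `F`-negative set for `S` avoiding `Y`. -/
def maxNegSetAvoiding (G : SimpleGraph V) (F : Set (Sym2 V)) (S Y : Set V) : Set V :=
  ⋃₀ {X | IsNegSet G F S X ∧ Disjoint X Y}

/-! ### Mod 2 boundaries, cuts and paths -/

section Chains

variable [Fintype V] [DecidableEq V]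

set_option linter.unusedSectionVars false

/-- The mod 2 boundary of an edge set `J`: the parity of the number of edges of `J` at each
vertex. -/
def bd (J : Finset (Sym2 V)) (u : V) : ZMod 2 := ∑ e ∈ J, if u ∈ e then 1 else 0

/-- The mod 2 indicator function of a vertex. -/
def dl (v : V) : V → ZMod 2 := Pi.single v 1

open Classical in
/-- The edge cut `δ_G(Y)` as a `Finset`. -/
noncomputable def cutF (G : SimpleGraph V) (Y : Set V) : Finset (Sym2 V) :=
  Finset.univ.filter (fun e => e ∈ cutEdges G Y)

lemma mem_cutF {G : SimpleGraph V} {Y : Set V} {e : Sym2 V} :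
    e ∈ cutF G Y ↔ e ∈ cutEdges G Y := by simp [cutF]

lemma sum_symmDiff_zmod {α : Type*} [DecidableEq α] (A B : Finset α) (f : α → ZMod 2) :
    ∑ e ∈ symmDiff A B, f e = ∑ e ∈ A, f e + ∑ e ∈ B, f e := by
  have h1 : ∑ e ∈ symmDiff A B, f e = ∑ e ∈ A \ B, f e + ∑ e ∈ B \ A, f e := by
    rw [symmDiff_def, Finset.sup_eq_union, Finset.sum_union disjoint_sdiff_sdiff]
  have h2 := Finset.sum_inter_add_sum_sdiff A B f
  have h3 := Finset.sum_inter_add_sum_sdiff B A f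
  rw [Finset.inter_comm B A] at h3
  rw [h1, ← h2, ← h3]
  have := CharTwo.add_self_eq_zero (∑ e ∈ A ∩ B, f e)
  linear_combination -this

lemma bd_symmDiff (A B : Finset (Sym2 V)) : bd (symmDiff A B) = bd A + bd B := by
  funext u
  exact sum_symmDiff_zmod A B _

lemma bd_edge {x y : V} (h : x ≠ y) : bd {s(x, y)} = dl x + dl y := by
  funext u
  have hs : bd {s(x, y)} u = if u ∈ s(x, y) then 1 else 0 := Finset.sum_singleton _ _
  rw [hs]
  by_cases h1 : u = x <;> by_cases h2 : u = y <;> simp_all [dl]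

lemma dl_add_self (v : V) : dl v + dl v = 0 := by
  funext u
  exact CharTwo.add_self_eq_zero _

lemma bd_add_self (f : V → ZMod 2) : f + f = 0 := by
  funext u
  exact CharTwo.add_self_eq_zero _

/-- Summing the boundary over `Y` counts, mod 2, the edges in the cut of `Y`. -/
lemma sum_bd (G : SimpleGraph V) (Y : Set V) (J : Finset (Sym2 V))
    (hJ : ∀ e ∈ J, e ∈ G.edgeSet) [DecidablePred (· ∈ Y)] :
    ∑ u ∈ Finset.univ.filter (· ∈ Y), bd J u = ((J ∩ cutF G Y).card : ZMod 2) := by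
  unfold bd
  rw [Finset.sum_comm, ← Finset.filter_mem_eq_inter, Finset.card_filter]
  push_cast
  refine Finset.sum_congr rfl fun e he => ?_
  have hG := hJ e he
  induction e with
  | h x y =>
    have hxy : x ≠ y := G.ne_of_adj hG
    have h1 : ∀ u : V, (if u ∈ s(x, y) then (1 : ZMod 2) else 0)
        = (if u = x then 1 else 0) + (if u = y then 1 else 0) := by
      intro u
      by_cases h1 : u = x <;> by_cases h2 : u = y <;> simp_all
    simp only [h1, Finset.sum_add_distrib, Finset.sum_ite_eq', Finset.mem_filter,
      Finset.mem_univ, true_and]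
    have hc : s(x, y) ∈ cutF G Y ↔ (x ∈ Y ∧ y ∉ Y) ∨ (y ∈ Y ∧ x ∉ Y) := by
      rw [mem_cutF]
      constructor
      · rintro ⟨-, a, b, hab, ha, hb⟩
        rcases Sym2.eq_iff.1 hab with ⟨rfl, rfl⟩ | ⟨rfl, rfl⟩
        · exact Or.inl ⟨ha, hb⟩
        · exact Or.inr ⟨ha, hb⟩
      · rintro (⟨ha, hb⟩ | ⟨ha, hb⟩)
        · exact ⟨hG, x, y, rfl, ha, hb⟩
        · exact ⟨hG, y, x, Sym2.eq_swap, ha, hb⟩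
    by_cases hx : x ∈ Y <;> by_cases hy : y ∈ Y <;> simp [hc, hx, hy]
    exact CharTwo.add_self_eq_zero (1 : ZMod 2)

/-- Re-routing along a common part `D` of the difference of `J` and `J'` preserves total cost. -/
lemma exchange (E J J' D : Finset (Sym2 V)) (hD : D ⊆ symmDiff J J') :
    (symmDiff J D ∩ E).card + (symmDiff J' D ∩ E).card = (J ∩ E).card + (J' ∩ E).card := by
  simp only [Finset.inter_comm _ E, ← Finset.filter_mem_eq_inter, Finset.card_filter,
    ← Finset.sum_add_distrib]
  refine Finset.sum_congr rfl fun e _ => ?_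
  have h := @hD e
  simp only [Finset.mem_symmDiff] at h ⊢
  by_cases h1 : e ∈ J <;> by_cases h2 : e ∈ J' <;> by_cases h3 : e ∈ D <;> simp_all

/-- An edge set avoiding the costed edges does not change the cost. -/
lemma inter_symmDiff_of_disjoint (E J Q : Finset (Sym2 V)) (h : Disjoint Q E) :
    symmDiff J Q ∩ E = J ∩ E := by
  ext e
  have hQ : e ∈ Q → e ∉ E := fun he => Finset.disjoint_left.1 h he
  simp only [Finset.mem_inter, Finset.mem_symmDiff]
  tauto

/-- The boundary of the edge set of a path consists of the two ends of the path. -/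
lemma bd_path {G : SimpleGraph V} {x y : V} (p : G.Walk x y) (hp : p.IsPath) :
    bd p.edges.toFinset = dl x + dl y := by
  induction p with
  | nil => rw [dl_add_self]; rfl
  | @cons a b c h p ih =>
    have hp' := hp.of_cons
    have hn : s(a, b) ∉ p.edges := fun hm =>
      ((SimpleGraph.Walk.cons_isPath_iff h p).1 hp).2 (p.fst_mem_support_of_mem_edges hm)
    have : (SimpleGraph.Walk.cons h p).edges.toFinset
        = symmDiff {s(a, b)} p.edges.toFinset := by
      ext e
      simp only [SimpleGraph.Walk.edges_cons, List.toFinset_cons, Finset.mem_insert,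
        Finset.mem_symmDiff, Finset.mem_singleton, List.mem_toFinset]
      constructor
      · rintro (rfl | h)
        · exact Or.inl ⟨rfl, hn⟩
        · exact Or.inr ⟨h, fun h' => hn (h' ▸ h)⟩
      · tauto
    rw [this, bd_symmDiff, ih hp', bd_edge h.ne]
    have := dl_add_self b
    linear_combination this

/-- An edge set whose boundary is `{v, b}` contains a path from `v` to `b`. -/
lemma exists_path {G : SimpleGraph V} (H : Finset (Sym2 V)) (hH : ∀ e ∈ H, e ∈ G.edgeSet)
    {v b : V} (hb : bd H = dl v + dl b) :
    ∃ p : G.Walk v b, p.IsPath ∧ ∀ e ∈ p.edges, e ∈ H := by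
  classical
  set G' : SimpleGraph V := SimpleGraph.fromEdgeSet (H : Set (Sym2 V)) with hG'
  have hadj : ∀ x y, G'.Adj x y ↔ s(x, y) ∈ H := by
    intro x y
    simp only [hG', SimpleGraph.fromEdgeSet_adj, Finset.mem_coe]
    exact ⟨fun h => h.1, fun h => ⟨h, G.ne_of_adj (hH _ h)⟩⟩
  have hle : G' ≤ G := fun x y h => hH _ ((hadj x y).1 h)
  have hreach : G'.Reachable v b := by
    by_contra hn
    have hs := sum_bd G {u | G'.Reachable v u} H hH
    -- no edge of `H` leaves the set of vertices reachable from `v` inside `H`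
    have h0 : H ∩ cutF G {u | G'.Reachable v u} = ∅ := by
      rw [Finset.eq_empty_iff_forall_notMem]
      intro e he
      rw [Finset.mem_inter, mem_cutF] at he
      obtain ⟨h1, -, x, y, rfl, hx, hy⟩ := he
      exact hy (SimpleGraph.Reachable.trans hx ((hadj x y).2 h1).reachable)
    rw [h0, hb] at hs
    simp [dl, Pi.single_apply, Finset.sum_add_distrib, hn] at hs
  obtain ⟨p, hp⟩ := hreach.exists_isPath
  refine ⟨p.mapLe hle, hp.mapLe hle, fun e he => ?_⟩
  rw [SimpleGraph.Walk.edges_mapLe_eq_edges] at he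
  have := p.edges_subset_edgeSet he
  induction e with
  | h x y => exact (hadj x y).1 this

/-- A path from outside `A` into `A` has an initial piece that crosses the cut of `A` once. -/
lemma first_hit {G : SimpleGraph V} (A : Set V) {v b : V} (p : G.Walk v b) (hp : p.IsPath)
    (hv : v ∉ A) (hb : b ∈ A) :
    ∃ x ∈ A, ∃ P : Finset (Sym2 V), (∀ e ∈ P, e ∈ p.edges) ∧ bd P = dl v + dl x ∧
      (P ∩ cutF G A).card = 1 := by
  induction p with
  | nil => exact absurd hb hv
  | @cons a c d h p ih =>
    have hn : s(a, c) ∉ p.edges := fun hm =>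
      ((SimpleGraph.Walk.cons_isPath_iff h p).1 hp).2 (p.fst_mem_support_of_mem_edges hm)
    by_cases hc : c ∈ A
    · refine ⟨c, hc, {s(a, c)}, by simp, bd_edge h.ne, ?_⟩
      have : s(a, c) ∈ cutF G A := mem_cutF.2 ⟨h, c, a, Sym2.eq_swap, hc, hv⟩
      rw [Finset.singleton_inter_of_mem this, Finset.card_singleton]
    · obtain ⟨x, hx, P, hP, hbd, hcard⟩ := ih hp.of_cons hc hb
      have hnP : s(a, c) ∉ P := fun h' => hn (hP _ h')
      refine ⟨x, hx, symmDiff P {s(a, c)}, ?_, ?_, ?_⟩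
      · intro e he
        simp only [Finset.mem_symmDiff, Finset.mem_singleton] at he
        rw [SimpleGraph.Walk.edges_cons, List.mem_cons]
        rcases he with he | he
        · exact Or.inr (hP _ he.1)
        · exact Or.inl he.1
      · rw [bd_symmDiff, hbd, bd_edge h.ne]
        have := dl_add_self c
        linear_combination this
      · rw [inter_symmDiff_of_disjoint, hcard]
        rw [Finset.disjoint_singleton_left, mem_cutF]
        rintro ⟨-, y, z, hyz, hy, -⟩
        rcases Sym2.eq_iff.1 hyz with ⟨rfl, rfl⟩ | ⟨rfl, rfl⟩
        · exact hv hy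
        · exact hc hy

/-! ### Potentials and joins in level components -/

/-- `J` is an edge set of `G` with mod 2 boundary `ρ + dl v`. With `ρ` the indicator function of
`T Δ {r}`, these are the joins of `T Δ {r} Δ {v}`; in particular, for `v = r`, the joins of `T`. -/
def Jn (G : SimpleGraph V) (ρ : V → ZMod 2) (v : V) (J : Finset (Sym2 V)) : Prop :=
  (∀ e ∈ J, e ∈ G.edgeSet) ∧ bd J = ρ + dl v

/-- `g v` is the minimum cost of an edge set with boundary `ρ + dl v` whenever there is one, where
the cost of an edge set is the number of its edges in `E`. -/
def IsPot (G : SimpleGraph V) (ρ : V → ZMod 2) (E : Finset (Sym2 V)) (g : V → ℤ) : Prop :=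
  (∀ v J, Jn G ρ v J → g v ≤ (J ∩ E).card) ∧
    ∀ v, (∃ J, Jn G ρ v J) → ∃ J, Jn G ρ v J ∧ ((J ∩ E).card : ℤ) = g v

lemma mem_symmDiff_edges {G : SimpleGraph V} {A B : Finset (Sym2 V)}
    (hA : ∀ e ∈ A, e ∈ G.edgeSet) (hB : ∀ e ∈ B, e ∈ G.edgeSet) :
    ∀ e ∈ symmDiff A B, e ∈ G.edgeSet := by
  intro e he
  rcases Finset.mem_symmDiff.1 he with h | h
  · exact hA _ h.1
  · exact hB _ h.1

lemma inter_symmDiff_edge (E J : Finset (Sym2 V)) (e : Sym2 V) (hJ : e ∈ J) (hE : e ∈ E) :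
    (symmDiff J {e} ∩ E).card + 1 = (J ∩ E).card := by
  have : symmDiff J {e} ∩ E = (J ∩ E).erase e := by
    ext x
    simp only [Finset.mem_inter, Finset.mem_symmDiff, Finset.mem_singleton, Finset.mem_erase]
    constructor
    · rintro ⟨⟨h1, h2⟩ | ⟨rfl, h2⟩, h3⟩
      · exact ⟨h2, h1, h3⟩
      · exact absurd hJ h2
    · rintro ⟨h1, h2, h3⟩
      exact ⟨Or.inl ⟨h2, h1⟩, h3⟩
  rw [this, Finset.card_erase_add_one (Finset.mem_inter.2 ⟨hJ, hE⟩)]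

/-- Let `A` be a set connected by cost-free edges on which the potential `g` is constantly `m`,
while it is larger just outside. A join ending in `A` with `n` edges in the cut of `A` costs at
least `m + n`; a join ending at `v ∉ A` costs at least `g v + n - 1`. The two estimates feed each
other: deleting a cut edge turns the first case into the second, and exchanging with a minimum
join ending in `A` turns the second into the first. -/
lemma cut_estimate {G : SimpleGraph V} {ρ : V → ZMod 2} {E : Finset (Sym2 V)} {g : V → ℤ}
    (hg : IsPot G ρ E g) (A : Set V) (m : ℤ) (hne : A.Nonempty) (hm : ∀ x ∈ A, g x = m)
    (hz : ∀ x ∈ A, ∀ z ∉ A, G.Adj x z → m + 1 ≤ g z) (hE : cutF G A ⊆ E)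
    (hQ : ∀ x ∈ A, ∀ y ∈ A, ∃ Q : Finset (Sym2 V), (∀ e ∈ Q, e ∈ G.edgeSet) ∧
      bd Q = dl x + dl y ∧ Disjoint Q E)
    (hJ : ∀ x ∈ A, ∃ J, Jn G ρ x J) (n : ℕ) :
    (∀ v ∈ A, ∀ J, Jn G ρ v J → (J ∩ cutF G A).card = n → m + n ≤ (J ∩ E).card) ∧
    (∀ v ∉ A, ∀ J, Jn G ρ v J → (J ∩ cutF G A).card = n → g v + n ≤ (J ∩ E).card + 1) := by
  have hQ' : ∀ Q : Finset (Sym2 V), Disjoint Q E → Disjoint Q (cutF G A) := fun Q h =>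
    Finset.disjoint_of_subset_right hE h
  -- deleting a cut edge `xz` from a join ending in `A` gives a join ending at `z`
  have hdel : ∀ v ∈ A, ∀ J, Jn G ρ v J → (J ∩ cutF G A).Nonempty →
      ∃ x ∈ A, ∃ z ∉ A, G.Adj x z ∧ ∃ J', Jn G ρ z J' ∧ (J' ∩ E).card + 1 = (J ∩ E).card ∧
        (J' ∩ cutF G A).card + 1 = (J ∩ cutF G A).card := by
    rintro v hv J hJv ⟨e, he⟩
    rw [Finset.mem_inter] at he
    obtain ⟨he1, he2⟩ := he
    have he3 := hE he2
    obtain ⟨heG, x, z, rfl, hx, hz'⟩ := mem_cutF.1 he2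
    obtain ⟨Q, hQ1, hQ2, hQ3⟩ := hQ v hv x hx
    refine ⟨x, hx, z, hz', heG, symmDiff (symmDiff J {s(x, z)}) Q, ⟨?_, ?_⟩, ?_, ?_⟩
    · exact mem_symmDiff_edges (mem_symmDiff_edges hJv.1 (by simpa using heG)) hQ1
    · rw [bd_symmDiff, bd_symmDiff, hJv.2, hQ2, bd_edge (G.ne_of_adj heG)]
      linear_combination dl_add_self v + dl_add_self x
    · rw [inter_symmDiff_of_disjoint _ _ _ hQ3, inter_symmDiff_edge _ _ _ he1 he3]
    · rw [inter_symmDiff_of_disjoint _ _ _ (hQ' _ hQ3), inter_symmDiff_edge _ _ _ he1 he2]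
  induction n with
  | zero =>
    refine ⟨fun v hv J hJv _ => ?_, fun v hv J hJv _ => ?_⟩
    · have := hg.1 v J hJv
      rw [hm v hv] at this
      simpa using this
    · have := hg.1 v J hJv
      push_cast
      linarith
  | succ n ih =>
    constructor
    · intro v hv J hJv hn
      obtain ⟨x, hx, z, hzA, hxz, J', hJ', h1, h2⟩ :=
        hdel v hv J hJv (Finset.card_pos.1 (by omega))
      have h3 := ih.2 z hzA J' hJ' (by omega)
      have h4 := hz x hx z hzA hxz
      push_cast
      omega
    · intro v hv J hJv hn
      obtain ⟨b, hb⟩ := hne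
      obtain ⟨B, hB, hBc⟩ := hg.2 b (hJ b hb)
      have hB0 : B ∩ cutF G A = ∅ := by
        by_contra hne
        obtain ⟨x, hx, z, hzA, hxz, J', hJ', h1, h2⟩ :=
          hdel b hb B hB (Finset.nonempty_iff_ne_empty.2 hne)
        have h3 := hg.1 z J' hJ'
        have h4 := hz x hx z hzA hxz
        have h5 := hm b hb
        omega
      set H := symmDiff J B with hH
      have hHG : ∀ e ∈ H, e ∈ G.edgeSet := mem_symmDiff_edges hJv.1 hB.1
      have hHbd : bd H = dl v + dl b := by
        rw [hH, bd_symmDiff, hJv.2, hB.2]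
        linear_combination bd_add_self ρ
      have hHcut : H ∩ cutF G A = J ∩ cutF G A := by
        refine inter_symmDiff_of_disjoint _ _ _ ?_
        rwa [Finset.disjoint_iff_inter_eq_empty]
      obtain ⟨p, hp, hpH⟩ := exists_path H hHG hHbd
      obtain ⟨x, hx, P, hP, hPbd, hPc⟩ := first_hit A p hp hv hb
      have hPH : P ⊆ H := fun e he => hpH e (hP e he)
      set D := symmDiff H P with hD
      have hDH : D ⊆ H := by
        intro e he
        rcases Finset.mem_symmDiff.1 he with h | h
        · exact h.1
        · exact hPH h.1
      have hDbd : bd D = dl x + dl b := by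
        rw [hD, bd_symmDiff, hHbd, hPbd]
        linear_combination dl_add_self v
      have hDcut : (D ∩ cutF G A).card + 1 = n + 1 := by
        have h1 : D ∩ cutF G A = (H ∩ cutF G A) \ (P ∩ cutF G A) := by
          ext e
          have := @hPH e
          simp only [hD, Finset.mem_inter, Finset.mem_symmDiff, Finset.mem_sdiff]
          tauto
        have h2 : P ∩ cutF G A ⊆ H ∩ cutF G A := Finset.inter_subset_inter_right hPH
        have h3 := Finset.card_sdiff_add_card_eq_card h2
        rw [← h1, hPc, hHcut, hn] at h3
        exact h3
      have hBD : Jn G ρ x (symmDiff B D) := by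
        refine ⟨mem_symmDiff_edges hB.1 fun e he => hHG e (hDH he), ?_⟩
        rw [bd_symmDiff, hB.2, hDbd]
        linear_combination dl_add_self b
      have hBDcut : (symmDiff B D ∩ cutF G A).card = n := by
        have : symmDiff B D ∩ cutF G A = D ∩ cutF G A := by
          rw [symmDiff_comm]
          refine inter_symmDiff_of_disjoint _ _ _ ?_
          rwa [Finset.disjoint_iff_inter_eq_empty]
        rw [this]
        omega
      have h1 := ih.1 x hx _ hBD hBDcut
      obtain ⟨Q, hQ1, hQ2, hQ3⟩ := hQ x hx b hb
      have hJD : Jn G ρ v (symmDiff (symmDiff J D) Q) := by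
        refine ⟨mem_symmDiff_edges (mem_symmDiff_edges hJv.1 fun e he => hHG e (hDH he)) hQ1, ?_⟩
        rw [bd_symmDiff, bd_symmDiff, hJv.2, hDbd, hQ2]
        linear_combination dl_add_self b + dl_add_self x
      have h2 := hg.1 v _ hJD
      rw [inter_symmDiff_of_disjoint _ _ _ hQ3] at h2
      have h3 := exchange E J B D hDH
      have h4 := hm b hb
      push_cast
      omega

/-- Moving the end vertex of a join across the cut of `A` changes the parity of the number of its
cut edges. -/
lemma cut_parity {G : SimpleGraph V} {ρ : V → ZMod 2} (A : Set V) {x v : V} {J J' : Finset (Sym2 V)}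
    (hJ' : Jn G ρ x J') (hJ : Jn G ρ v J) (hx : x ∈ A) (hv : v ∉ A) :
    (((J ∩ cutF G A).card : ZMod 2)) = (J' ∩ cutF G A).card + 1 := by
  classical
  have h1 := sum_bd G A J hJ.1
  have h2 := sum_bd G A J' hJ'.1
  rw [hJ.2] at h1
  rw [hJ'.2] at h2
  simp [dl, Pi.single_apply, Finset.sum_add_distrib, hx, hv] at h1 h2
  rw [← h1, ← h2, add_assoc, CharTwo.add_self_eq_zero, add_zero]

/-- If every cycle has even cost, then the ends of a costed edge have different potentials. -/
lemma pot_ne {G : SimpleGraph V} {ρ : V → ZMod 2} {E : Finset (Sym2 V)} {g : V → ℤ}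
    (hg : IsPot G ρ E g)
    (hpar : ∀ C : Finset (Sym2 V), (∀ e ∈ C, e ∈ G.edgeSet) → bd C = 0 → Even (C ∩ E).card)
    {x z : V} (h : G.Adj x z) (hE : s(x, z) ∈ E) (hx : ∃ J, Jn G ρ x J) (hz : ∃ J, Jn G ρ z J) :
    g z ≠ g x := by
  intro hxz
  obtain ⟨J, hJ, hJc⟩ := hg.2 x hx
  obtain ⟨J', hJ', hJc'⟩ := hg.2 z hz
  have h1 := hpar (symmDiff (symmDiff J J') {s(x, z)})
    (mem_symmDiff_edges (mem_symmDiff_edges hJ.1 hJ'.1) (by simpa using h)) (by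
      rw [bd_symmDiff, bd_symmDiff, hJ.2, hJ'.2, bd_edge h.ne]
      linear_combination bd_add_self ρ + dl_add_self x + dl_add_self z)
  -- modulo 2 the cost is additive
  have hadd : ∀ A B : Finset (Sym2 V), (((symmDiff A B ∩ E).card : ℕ) : ZMod 2)
      = (A ∩ E).card + (B ∩ E).card := by
    intro A B
    have := sum_symmDiff_zmod A B (fun e => if e ∈ E then 1 else 0)
    simpa [← Finset.filter_mem_eq_inter] using this
  rw [← ZMod.natCast_eq_zero_iff_even, hadd, hadd] at h1
  have h2 : (J ∩ E).card = (J' ∩ E).card := by omega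
  rw [h2, CharTwo.add_self_eq_zero, Finset.singleton_inter_of_mem hE] at h1
  simp at h1

lemma jn_adj {G : SimpleGraph V} {ρ : V → ZMod 2} {x z : V} (h : G.Adj x z)
    {J : Finset (Sym2 V)} (hJ : Jn G ρ x J) : Jn G ρ z (symmDiff J {s(x, z)}) := by
  refine ⟨mem_symmDiff_edges hJ.1 (by simpa using h), ?_⟩
  rw [bd_symmDiff, hJ.2, bd_edge h.ne]
  linear_combination dl_add_self x

lemma pot_le {G : SimpleGraph V} {ρ : V → ZMod 2} {E : Finset (Sym2 V)} {g : V → ℤ}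
    (hg : IsPot G ρ E g) {x z : V} (h : G.Adj x z) (hE : s(x, z) ∉ E)
    (hx : ∃ J, Jn G ρ x J) : g z ≤ g x := by
  obtain ⟨J, hJ, hJc⟩ := hg.2 x hx
  have := hg.1 z _ (jn_adj h hJ)
  rw [inter_symmDiff_of_disjoint _ _ _ (by simpa using hE)] at this
  omega

/-- The key step of the induction: making the cut of `A` cost-free lowers the potential by one
outside `A` and keeps it inside `A`. -/
lemma pot_contract {G : SimpleGraph V} {ρ : V → ZMod 2} {E : Finset (Sym2 V)} {g : V → ℤ}
    (hg : IsPot G ρ E g) (A : Set V) [DecidablePred (· ∈ A)] (m : ℤ) {b : V} (hb : b ∈ A)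
    (hm : ∀ x ∈ A, g x = m) (hE : cutF G A ⊆ E) (hJ : ∀ x ∈ A, ∃ J, Jn G ρ x J)
    (hest : ∀ n : ℕ,
      (∀ v ∈ A, ∀ J, Jn G ρ v J → (J ∩ cutF G A).card = n → m + n ≤ (J ∩ E).card) ∧
      (∀ v ∉ A, ∀ J, Jn G ρ v J → (J ∩ cutF G A).card = n → g v + n ≤ (J ∩ E).card + 1)) :
    (∀ J, (J ∩ (E \ cutF G A)).card + (J ∩ cutF G A).card = (J ∩ E).card) ∧
    (∀ v ∉ A, ∀ J, Jn G ρ v J → 1 ≤ (J ∩ cutF G A).card) ∧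
    IsPot G ρ (E \ cutF G A) (fun v => if v ∈ A then g v else g v - 1) := by
  have hsplit : ∀ J, (J ∩ (E \ cutF G A)).card + (J ∩ cutF G A).card = (J ∩ E).card := by
    intro J
    rw [← Finset.card_union_of_disjoint, ← Finset.inter_union_distrib_left,
      Finset.sdiff_union_of_subset hE]
    exact Finset.disjoint_of_subset_left Finset.inter_subset_right
      (Finset.disjoint_of_subset_right Finset.inter_subset_right Finset.sdiff_disjoint)
  have hpos : ∀ v ∉ A, ∀ J, Jn G ρ v J → 1 ≤ (J ∩ cutF G A).card := by
    intro v hv J hJv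
    obtain ⟨B, hB, hBc⟩ := hg.2 b (hJ b hb)
    have h1 := (hest _).1 b hb B hB rfl
    have h2 := hm b hb
    have h3 := cut_parity A hB hJv hb hv
    rw [show (B ∩ cutF G A).card = 0 by omega] at h3
    by_contra h4
    rw [show (J ∩ cutF G A).card = 0 by omega] at h3
    simp at h3
  refine ⟨hsplit, hpos, fun v J hJv => ?_, fun v hv => ?_⟩
  · have h1 := hsplit J
    by_cases hv : v ∈ A
    · have h2 := (hest _).1 v hv J hJv rfl
      have h3 := hm v hv
      simp only [hv, if_true]
      omega
    · have h2 := (hest _).2 v hv J hJv rfl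
      simp only [hv, if_false]
      omega
  · obtain ⟨J, hJv, hJc⟩ := hg.2 v hv
    refine ⟨J, hJv, ?_⟩
    have h1 := hsplit J
    by_cases hvA : v ∈ A
    · have h2 := (hest _).1 v hvA J hJv rfl
      have h3 := hm v hvA
      simp only [hvA, if_true]
      omega
    · have h2 := (hest _).2 v hvA J hJv rfl
      have h3 := hpos v hvA J hJv
      simp only [hvA, if_false]
      omega

/-- Sebő's theorem on level components of the potential: a minimum join ending outside a level
component `K` has at most one edge in the cut of `K`. The induction makes the cut of a lowest
piece `A` of `K` cost-free. -/
theorem level_cut {G : SimpleGraph V} {ρ : V → ZMod 2} (K : Set V)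
    (hKc : (G.induce K).Connected) (n : ℕ) :
    ∀ (E : Finset (Sym2 V)) (g : V → ℤ) (j : ℤ), E.card = n → IsPot G ρ E g →
    (∀ C : Finset (Sym2 V), (∀ e ∈ C, e ∈ G.edgeSet) → bd C = 0 → Even (C ∩ E).card) →
    (∀ x ∈ K, ∃ J, Jn G ρ x J) → (∀ x ∈ K, g x ≤ j) →
    (∀ x ∈ K, ∀ z ∉ K, G.Adj x z → j < g z) →
    ∀ v ∉ K, ∀ J, Jn G ρ v J → ((J ∩ E).card : ℤ) ≤ g v → (J ∩ cutF G K).card ≤ 1 := by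
  classical
  induction n using Nat.strong_induction_on with
  | _ n ih =>
  intro E g j hn hg hpar hKJ hKj hKz v hv J hJ hJc
  obtain ⟨⟨b₀, hb₀⟩⟩ := hKc.nonempty
  obtain ⟨b, hbK, hbmin⟩ := Set.exists_min_image K g (Set.toFinite K) ⟨b₀, hb₀⟩
  set Z := G.deleteEdges (E : Set (Sym2 V)) with hZ
  have hZadj : ∀ x y, Z.Adj x y ↔ G.Adj x y ∧ s(x, y) ∉ E := by
    intro x y
    simp [hZ, SimpleGraph.deleteEdges_adj]
  set A : Set V := {x | Z.Reachable b x} with hA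
  have hbA : b ∈ A := SimpleGraph.Reachable.refl b
  have hAprop : ∀ x ∈ A, x ∈ K ∧ g x = g b := by
    intro x hx
    have hx' := (SimpleGraph.reachable_iff_reflTransGen b x).1 hx
    induction hx' with
    | refl => exact ⟨hbK, rfl⟩
    | @tail y z hy hyz ih =>
      obtain ⟨h1, h2⟩ := ih ((SimpleGraph.reachable_iff_reflTransGen b y).2 hy)
      obtain ⟨h3, h4⟩ := (hZadj y z).1 hyz
      have h5 := pot_le hg h3 h4 (hKJ y h1)
      have hzK : z ∈ K := by
        by_contra hzK
        have := hKz y h1 z hzK h3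
        have := hKj y h1
        omega
      exact ⟨hzK, by have := hbmin z hzK; omega⟩
  have hcutE : cutF G A ⊆ E := by
    intro e he
    obtain ⟨heG, x, z, rfl, hx, hz⟩ := mem_cutF.1 he
    by_contra hcon
    exact hz (SimpleGraph.Reachable.trans hx ((hZadj x z).2 ⟨heG, hcon⟩).reachable)
  have hz : ∀ x ∈ A, ∀ z ∉ A, G.Adj x z → g b + 1 ≤ g z := by
    intro x hx z hzA hxz
    obtain ⟨hxK, hxb⟩ := hAprop x hx
    by_cases hzK : z ∈ K
    · have h1 := hbmin z hzK
      have h2 := pot_ne hg hpar hxz (hcutE (mem_cutF.2 ⟨hxz, x, z, rfl, hx, hzA⟩))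
        (hKJ x hxK) (hKJ z hzK)
      omega
    · have h1 := hKz x hxK z hzK hxz
      have h2 := hKj b hbK
      omega
  have hQ : ∀ x ∈ A, ∀ y ∈ A, ∃ Q : Finset (Sym2 V), (∀ e ∈ Q, e ∈ G.edgeSet) ∧
      bd Q = dl x + dl y ∧ Disjoint Q E := by
    intro x hx y hy
    obtain ⟨p, hp⟩ := (SimpleGraph.Reachable.trans (SimpleGraph.Reachable.symm hx)
      hy).exists_isPath
    have hmem : ∀ e ∈ p.edges, e ∈ G.edgeSet ∧ e ∉ E := by
      intro e he
      have := p.edges_subset_edgeSet he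
      induction e with
      | h a c => exact (hZadj a c).1 this
    refine ⟨p.edges.toFinset, fun e he => (hmem e (List.mem_toFinset.1 he)).1, bd_path p hp, ?_⟩
    rw [Finset.disjoint_left]
    exact fun e he => (hmem e (List.mem_toFinset.1 he)).2
  have hAJ : ∀ x ∈ A, ∃ J, Jn G ρ x J := fun x hx => hKJ x (hAprop x hx).1
  have hest := cut_estimate hg A (g b) ⟨b, hbA⟩ (fun x hx => (hAprop x hx).2) hz hcutE hQ hAJ
  obtain ⟨hsplit, hpos, hpot⟩ :=
    pot_contract hg A (g b) hbA (fun x hx => (hAprop x hx).2) hcutE hAJ hest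
  have hvA : v ∉ A := fun h => hv (hAprop v h).1
  by_cases hex : ∃ x ∈ A, ∃ z ∈ K, z ∉ A ∧ G.Adj x z
  · obtain ⟨x, hx, z, hzK, hzA, hxz⟩ := hex
    have hjb : g b < j := by
      have h1 := hz x hx z hzA hxz
      have h2 := hKj z hzK
      omega
    have hlt : (E \ cutF G A).card < n := by
      rw [← hn]
      refine Finset.card_lt_card (Finset.sdiff_ssubset hcutE ⟨s(x, z), ?_⟩)
      exact mem_cutF.2 ⟨hxz, x, z, rfl, hx, hzA⟩
    refine ih _ hlt (E \ cutF G A) _ (j - 1) rfl hpot ?_ hKJ ?_ ?_ v hv J hJ ?_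
    · intro C hC hCbd
      have h1 := hpar C hC hCbd
      have h2 := hsplit C
      have h3 := sum_bd G A C hC
      rw [hCbd] at h3
      simp only [Pi.zero_apply, Finset.sum_const_zero] at h3
      have h4 := ZMod.natCast_eq_zero_iff_even.1 h3.symm
      rw [← h2] at h1
      exact (Nat.even_add.1 h1).2 h4
    · intro y hy
      have h1 := hKj y hy
      by_cases hyA : y ∈ A
      · have h2 := (hAprop y hyA).2
        simp only [hyA, if_true]
        omega
      · simp only [hyA, if_false]
        omega
    · intro y hy w hw hyw
      have h1 := hKz y hy w hw hyw
      have hwA : w ∉ A := fun h => hw (hAprop w h).1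
      simp only [hwA, if_false]
      omega
    · have h1 := hsplit J
      have h2 := hpos v hvA J hJ
      simp only [hvA, if_false]
      omega
  · -- no edge of `K` leaves `A`, so `A` is all of `K`
    have hKA : K = A := by
      refine Set.Subset.antisymm (fun y hy => ?_) fun y hy => (hAprop y hy).1
      have hr := (SimpleGraph.reachable_iff_reflTransGen _ _).1 (hKc.preconnected ⟨b, hbK⟩ ⟨y, hy⟩)
      have hall : ∀ w : K, Relation.ReflTransGen (G.induce K).Adj ⟨b, hbK⟩ w → (w : V) ∈ A := by
        intro w hw
        induction hw with
        | refl => exact hbA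
        | @tail c d _ hcd ih =>
          by_contra hd
          exact hex ⟨c, ih, d, d.2, hd, hcd⟩
      exact hall _ hr
    have h1 := (hest _).2 v hvA J hJ rfl
    rw [hKA]
    omega

/-! ### Distances as potentials, and decapital distance components -/

open Classical in
lemma isJoin_coe_iff {G : SimpleGraph V} {T : Set V} {J : Finset (Sym2 V)} :
    IsJoin G T (J : Set (Sym2 V)) ↔
      (∀ e ∈ J, e ∈ G.edgeSet) ∧ bd J = fun v => if v ∈ T then 1 else 0 := by
  have h : ∀ v, bd J v = (({e ∈ (J : Set (Sym2 V)) | v ∈ e}).ncard : ZMod 2) := by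
    intro v
    have : {e ∈ (J : Set (Sym2 V)) | v ∈ e} = ((J.filter (v ∈ ·) : Finset _) : Set (Sym2 V)) := by
      ext e; simp
    rw [this, Set.ncard_coe_finset, bd, Finset.sum_boole]
  unfold IsJoin
  refine and_congr Iff.rfl ?_
  rw [funext_iff]
  refine forall_congr' fun v => ?_
  rw [h v]
  by_cases hv : v ∈ T
  · simp only [hv, if_true, iff_true]
    exact ZMod.natCast_eq_one_iff_odd.symm
  · simp only [hv, if_false, iff_false, Nat.not_odd_iff_even]
    exact ZMod.natCast_eq_zero_iff_even.symm

lemma IsMinJoin.card_le {G : SimpleGraph V} {T : Set V} {F J : Finset (Sym2 V)}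
    (hF : IsMinJoin G T (F : Set (Sym2 V))) (hJ : ∀ e ∈ J, e ∈ G.edgeSet) (hb : bd J = bd F) :
    F.card ≤ J.card := by
  have h1 : IsJoin G T (J : Set (Sym2 V)) :=
    isJoin_coe_iff.2 ⟨hJ, hb.trans (isJoin_coe_iff.1 hF.1).2⟩
  have h2 := hF.2
  rw [Set.ncard_coe_finset] at h2
  rw [h2]
  exact Nat.sInf_le ⟨_, h1, Set.ncard_coe_finset J⟩

lemma walkWt_path {G : SimpleGraph V} (F : Finset (Sym2 V)) {x y : V} (p : G.Walk x y)
    (hp : p.IsPath) :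
    walkWt (F : Set (Sym2 V)) p = (symmDiff F p.edges.toFinset).card - (F.card : ℤ) := by
  have h1 : walkWt (F : Set (Sym2 V)) p = ∑ e ∈ p.edges.toFinset, edgeWt (F : Set (Sym2 V)) e :=
    (List.sum_toFinset _ hp.isTrail.edges_nodup).symm
  rw [h1]
  generalize p.edges.toFinset = P
  have h2 := Finset.sum_inter_add_sum_sdiff P F (edgeWt (F : Set (Sym2 V)))
  have h3 : ∑ e ∈ P ∩ F, edgeWt (F : Set (Sym2 V)) e = -((P ∩ F).card : ℤ) := by
    rw [Finset.sum_congr rfl (g := fun _ => (-1 : ℤ))]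
    · simp
    · intro e he
      simp [edgeWt, (Finset.mem_inter.1 he).2]
  have h4 : ∑ e ∈ P \ F, edgeWt (F : Set (Sym2 V)) e = ((P \ F).card : ℤ) := by
    rw [Finset.sum_congr rfl (g := fun _ => (1 : ℤ))]
    · simp
    · intro e he
      simp [edgeWt, (Finset.mem_sdiff.1 he).2]
  have h5 : (symmDiff F P).card = (F \ P).card + (P \ F).card := by
    rw [symmDiff_def, Finset.sup_eq_union, Finset.card_union_of_disjoint disjoint_sdiff_sdiff]
  have h6 := Finset.card_inter_add_card_sdiff F P
  rw [Finset.inter_comm] at h6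
  omega

/-- The `F`-distance from `r`, shifted by `|F|`, is the potential for the cost counting all
edges: `dist_F(r, v) = ν(G, T Δ {r, v}) - ν(G, T)`. -/
lemma isPot_dist {G : SimpleGraph V} {T : Set V} {F : Finset (Sym2 V)}
    (hF : IsMinJoin G T (F : Set (Sym2 V))) (r : V) (E : Finset (Sym2 V))
    (hE : ∀ e, e ∈ E ↔ e ∈ G.edgeSet) :
    IsPot G (bd F + dl r) E (fun v => distF G (F : Set (Sym2 V)) r v + F.card) := by
  classical
  have hFG := (isJoin_coe_iff.1 hF.1).1
  have hinter : ∀ v J, Jn G (bd F + dl r) v J → J ∩ E = J := fun v J hJ =>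
    Finset.inter_eq_left.2 fun e he => (hE e).2 (hJ.1 e he)
  have key : ∀ v, (∃ J, Jn G (bd F + dl r) v J) → ∃ J, Jn G (bd F + dl r) v J ∧
      (∀ J', Jn G (bd F + dl r) v J' → J.card ≤ J'.card) ∧
      (J.card : ℤ) = distF G (F : Set (Sym2 V)) r v + F.card := by
    rintro v ⟨J₀, hJ₀⟩
    obtain ⟨J, hJ, hmin⟩ := Set.exists_min_image {J | Jn G (bd F + dl r) v J} Finset.card
      (Set.toFinite _) ⟨J₀, hJ₀⟩
    refine ⟨J, hJ, fun J' hJ' => hmin J' hJ', ?_⟩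
    have hJ : Jn G (bd F + dl r) v J := hJ
    have hpath : ∀ p : G.Walk r v, p.IsPath →
        Jn G (bd F + dl r) v (symmDiff F p.edges.toFinset) := by
      intro p hp
      refine ⟨mem_symmDiff_edges hFG fun e he => p.edges_subset_edgeSet (List.mem_toFinset.1 he), ?_⟩
      rw [bd_symmDiff, bd_path p hp]
      ring
    have hleast : IsLeast {n : ℤ | ∃ p : G.Walk r v, p.IsPath ∧ walkWt (F : Set (Sym2 V)) p = n}
        (J.card - F.card) := by
      constructor
      · have hHG := mem_symmDiff_edges hFG hJ.1
        have hHbd : bd (symmDiff F J) = dl r + dl v := by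
          rw [bd_symmDiff, hJ.2]
          linear_combination bd_add_self (bd F)
        obtain ⟨p, hp, hpH⟩ := exists_path _ hHG hHbd
        refine ⟨p, hp, ?_⟩
        rw [walkWt_path F p hp]
        set P := p.edges.toFinset with hP
        have hPH : P ⊆ symmDiff F J := fun e he => hpH e (List.mem_toFinset.1 he)
        have hDH : symmDiff (symmDiff F J) P ⊆ symmDiff F J := by
          intro e he
          rcases Finset.mem_symmDiff.1 he with h | h
          · exact h.1
          · exact hPH h.1
        -- `D` is the part of `F Δ J` off the path; it is even, so exchanging along it is free
        set D := symmDiff (symmDiff F J) P with hD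
        have h1 := exchange Finset.univ F J D hDH
        simp only [Finset.inter_univ] at h1
        have hJD : symmDiff J D = symmDiff F P := by
          rw [hD, symmDiff_comm F J, symmDiff_assoc, symmDiff_symmDiff_cancel_left]
        have h2 : F.card ≤ (symmDiff F D).card := by
          refine hF.card_le (mem_symmDiff_edges hFG fun e he => hHG e (hDH he)) ?_
          rw [bd_symmDiff, hD, bd_symmDiff, hHbd, hP, bd_path p hp]
          linear_combination dl_add_self r + dl_add_self v
        have h3 : J.card ≤ (symmDiff F P).card := hmin _ (hpath p hp)
        rw [hJD] at h1
        omega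
      · rintro n ⟨p, hp, rfl⟩
        rw [walkWt_path F p hp]
        have := hmin _ (hpath p hp)
        omega
    have := hleast.csInf_eq
    unfold distF
    omega
  refine ⟨fun v J hJ => ?_, fun v hv => ?_⟩
  · obtain ⟨J', hJ', h1, h2⟩ := key v ⟨J, hJ⟩
    have h3 := h1 J hJ
    rw [hinter v J hJ]
    dsimp only
    omega
  · obtain ⟨J', hJ', h1, h2⟩ := key v hv
    exact ⟨J', hJ', by rw [hinter v J' hJ']; exact h2⟩

/-- In a bipartite graph every even edge set has even size: it is the cut of a colour class. -/
lemma even_of_bd_eq_zero {G : SimpleGraph V} (hbip : G.Colorable 2) (C : Finset (Sym2 V))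
    (hC : ∀ e ∈ C, e ∈ G.edgeSet) (h : bd C = 0) : Even C.card := by
  classical
  obtain ⟨c⟩ := hbip
  have h1 := sum_bd G {v | c v = 0} C hC
  have h2 : C ∩ cutF G {v | c v = 0} = C := by
    refine Finset.inter_eq_left.2 fun e he => ?_
    have hG := hC e he
    induction e with
    | h x y =>
      have hne : c x ≠ c y := c.valid hG
      rw [mem_cutF]
      by_cases hx : c x = 0
      · exact ⟨hG, x, y, rfl, hx, fun hy : c y = 0 => hne (hx.trans hy.symm)⟩
      · have hy : c y = 0 := by omega
        exact ⟨hG, y, x, Sym2.eq_swap, hy, hx⟩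
  rw [h2, h] at h1
  simp only [Pi.zero_apply, Finset.sum_const_zero] at h1
  exact ZMod.natCast_eq_zero_iff_even.1 h1.symm

/-- Every minimum join has at most one edge in the cut of a decapital distance component. The
distances are those of one minimum join `F`, but they do not depend on it. -/
lemma decap_cut {G : SimpleGraph V} {T : Set V} (hbip : G.Colorable 2) {F J : Finset (Sym2 V)}
    (hF : IsMinJoin G T (F : Set (Sym2 V))) (hJ : IsMinJoin G T (J : Set (Sym2 V)))
    {r : V} {K : Set V} (hK : IsDecapDistComp G (F : Set (Sym2 V)) r K) :
    (J ∩ cutF G K).card ≤ 1 := by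
  classical
  obtain ⟨i, ⟨-, -, hKU, hKc, hKmax⟩, hrK⟩ := hK
  set E : Finset (Sym2 V) := Finset.univ.filter (· ∈ G.edgeSet) with hEdef
  have hE : ∀ e, e ∈ E ↔ e ∈ G.edgeSet := fun e => by simp [hEdef]
  have hFG := (isJoin_coe_iff.1 hF.1)
  have hJG := (isJoin_coe_iff.1 hJ.1)
  have hpot := isPot_dist hF r E hE
  have hFr : Jn G (bd F + dl r) r F := by
    refine ⟨hFG.1, ?_⟩
    rw [add_assoc, dl_add_self, add_zero]
  have hJr : Jn G (bd F + dl r) r J := by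
    refine ⟨hJG.1, ?_⟩
    rw [add_assoc, dl_add_self, add_zero, hFG.2, hJG.2]
  have hreachJ : ∀ x, G.Reachable r x → ∃ J, Jn G (bd F + dl r) x J := by
    intro x hx
    have hx' := (SimpleGraph.reachable_iff_reflTransGen r x).1 hx
    induction hx' with
    | refl => exact ⟨F, hFr⟩
    | @tail y z hy hyz ih =>
      obtain ⟨J, hJ⟩ := ih ((SimpleGraph.reachable_iff_reflTransGen r y).2 hy)
      exact ⟨_, jn_adj hyz hJ⟩
  by_cases hreach : ∀ x ∈ K, G.Reachable r x
  · refine level_cut K hKc E.card E _ (i + F.card) rfl hpot ?_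
      (fun x hx => hreachJ x (hreach x hx)) ?_ ?_ r hrK J hJr ?_
    · intro C hC hCb
      rw [Finset.inter_eq_left.2 fun e he => (hE e).2 (hC e he)]
      exact even_of_bd_eq_zero hbip C hC hCb
    · intro x hx
      have : distF G (F : Set (Sym2 V)) r x ≤ i := hKU hx
      linarith
    · intro x hx z hz hxz
      have : ¬ distF G (F : Set (Sym2 V)) r z ≤ i := fun h => hz (hKmax x hx z h hxz)
      linarith
    · obtain ⟨J', hJ', h1⟩ := hpot.2 r ⟨F, hFr⟩
      have h2 : J.card ≤ J'.card := by
        refine hJ.card_le hJ'.1 ?_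
        rw [hJ'.2, add_assoc, dl_add_self, add_zero, hFG.2, hJG.2]
      rw [Finset.inter_eq_left.2 fun e he => (hE e).2 (hJ'.1 e he)] at h1
      rw [Finset.inter_eq_left.2 fun e he => (hE e).2 (hJr.1 e he)]
      dsimp only at h1 ⊢
      omega
  · -- `K` is not reachable from `r`: all distances are the junk value `0` and the cut is empty
    push Not at hreach
    obtain ⟨x₀, hx₀, hx₀r⟩ := hreach
    have hK' : ∀ x ∈ K, ¬ G.Reachable r x := by
      intro x hx hrx
      have h1 := hKc.preconnected ⟨x, hx⟩ ⟨x₀, hx₀⟩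
      exact hx₀r (hrx.trans (h1.map (SimpleGraph.Embedding.induce K).toHom))
    have hdist : ∀ x, ¬ G.Reachable r x → distF G (F : Set (Sym2 V)) r x = 0 := by
      intro x hx
      have : {n : ℤ | ∃ p : G.Walk r x, p.IsPath ∧ walkWt (F : Set (Sym2 V)) p = n} = ∅ := by
        ext n
        simp only [Set.mem_ofPred_eq, Set.mem_empty_iff_false, iff_false]
        rintro ⟨p, -⟩
        exact hx p.reachable
      rw [distF, this]
      exact Int.csInf_empty
    have : J ∩ cutF G K = ∅ := by
      rw [Finset.eq_empty_iff_forall_notMem]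
      intro e he
      obtain ⟨heG, x, z, rfl, hx, hz⟩ := mem_cutF.1 (Finset.mem_inter.1 he).2
      have hzr : ¬ G.Reachable r z := fun h =>
        hK' x hx (h.trans (SimpleGraph.Adj.reachable (SimpleGraph.Adj.symm heG)))
      have hle : distF G (F : Set (Sym2 V)) r z ≤ i := by
        rw [hdist z hzr, ← hdist x (hK' x hx)]
        exact hKU hx
      exact hz (hKmax x hx z hle heG)
    rw [this]
    simp

lemma FactorConnected.tail {G : SimpleGraph V} {T : Set V} {u x y : V}
    (h : FactorConnected G T u x) (hxy : G.Adj x y) (ha : Allowed G T s(x, y)) :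
    FactorConnected G T u y := by
  obtain ⟨p, hp⟩ := h
  refine ⟨p.concat hxy, fun e he => ?_⟩
  rw [SimpleGraph.Walk.edges_concat, List.concat_eq_append, List.mem_append] at he
  rcases he with he | he
  · exact hp e he
  · rw [List.mem_singleton.1 he]
    exact ha

end Chains

/-! ### The factor-component of the allowed edges in the cut -/

/-- For a bipartite graft `(G, T)`, a minimum join `F`, and a
decapital distance component `K` w.r.t. `r`: all allowed edges in the edge cut
`δ_G(K)` lie in the same factor-component of `(G, T)` (i.e. all their endpoints
are mutually factor-connected). -/
theorem stmt_11 {V : Type*} [Fintype V] [DecidableEq V]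
    (G : SimpleGraph V) (T : Set V) (hbip : G.Colorable 2) (hgraft : IsGraft G T)
    (F : Set (Sym2 V)) (hF : IsMinJoin G T F)
    (r : V) (K : Set V) (hK : IsDecapDistComp G F r K) :
    ∀ e₁ ∈ cutEdges G K, ∀ e₂ ∈ cutEdges G K,
      Allowed G T e₁ → Allowed G T e₂ →
      ∀ u v : V, u ∈ e₁ → v ∈ e₂ → FactorConnected G T u v := by
  classical
  intro e₁ he₁ e₂ he₂ ⟨F₁, hF₁, heF₁⟩ ⟨F₂, hF₂, heF₂⟩ u v hu hv
  obtain ⟨F, rfl⟩ : ∃ J : Finset (Sym2 V), (J : Set (Sym2 V)) = F :=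
    ⟨F.toFinite.toFinset, by simp⟩
  obtain ⟨F₁, rfl⟩ : ∃ J : Finset (Sym2 V), (J : Set (Sym2 V)) = F₁ :=
    ⟨F₁.toFinite.toFinset, by simp⟩
  obtain ⟨F₂, rfl⟩ : ∃ J : Finset (Sym2 V), (J : Set (Sym2 V)) = F₂ :=
    ⟨F₂.toFinite.toFinset, by simp⟩
  rw [Finset.mem_coe] at heF₁ heF₂
  have hJ₁ := isJoin_coe_iff.1 hF₁.1
  have hJ₂ := isJoin_coe_iff.1 hF₂.1
  set S : Set V := {w | FactorConnected G T u w} with hS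
  -- an edge of a minimum join has both ends in `S` or none
  have hclosed : ∀ J : Finset (Sym2 V), IsMinJoin G T (J : Set (Sym2 V)) → ∀ e ∈ J,
      ∀ a ∈ e, a ∈ S → ∀ b ∈ e, b ∈ S := by
    intro J hJ e he a ha haS b hb
    by_cases hab : b = a
    · rwa [hab]
    · have hes : e = s(a, b) := (Sym2.mem_and_mem_iff (Ne.symm hab)).1 ⟨ha, hb⟩
      have hG := (isJoin_coe_iff.1 hJ.1).1 e he
      rw [hes] at hG he
      exact FactorConnected.tail haS hG ⟨J, hJ, he⟩
  have huS : u ∈ S := ⟨SimpleGraph.Walk.nil, by simp⟩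
  -- the only edge of `J` that can leave `K ∩ S` is the one leaving `K`
  have huniq : ∀ J : Finset (Sym2 V), IsMinJoin G T (J : Set (Sym2 V)) → ∀ e' ∈ J,
      e' ∈ cutEdges G K → ∀ e ∈ J ∩ cutF G (K ∩ S), e = e' ∧ ∃ a ∈ e, a ∈ S := by
    intro J hJ e' he' hc e he
    obtain ⟨heJ, hec⟩ := Finset.mem_inter.1 he
    obtain ⟨hG, x, y, rfl, hx, hy⟩ := mem_cutF.1 hec
    have hyS : y ∈ S := hclosed J hJ _ heJ x (Sym2.mem_mk_left x y) hx.2 y (Sym2.mem_mk_right x y)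
    refine ⟨?_, x, Sym2.mem_mk_left x y, hx.2⟩
    refine Finset.card_le_one.1 (decap_cut hbip hF hJ hK) _ ?_ _ ?_
    · exact Finset.mem_inter.2
        ⟨heJ, mem_cutF.2 ⟨hG, x, y, rfl, hx.1, fun h => hy ⟨h, hyS⟩⟩⟩
    · exact Finset.mem_inter.2 ⟨he', mem_cutF.2 hc⟩
  have h1 : F₁ ∩ cutF G (K ∩ S) = {e₁} := by
    refine Finset.Subset.antisymm ?_ ?_
    · intro e he
      exact Finset.mem_singleton.2 (huniq F₁ hF₁ e₁ heF₁ he₁ e he).1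
    · rw [Finset.singleton_subset_iff, Finset.mem_inter, mem_cutF]
      obtain ⟨hG, x, y, hxy, hx, hy⟩ := he₁
      have hxS : x ∈ S := hclosed F₁ hF₁ e₁ heF₁ u hu huS x (hxy ▸ Sym2.mem_mk_left x y)
      exact ⟨heF₁, hG, x, y, hxy, ⟨hx, hxS⟩, fun h => hy h.1⟩
  -- both joins have the same boundary, so `F₂` also crosses the cut of `K ∩ S`
  have h2 := sum_bd G (K ∩ S) F₁ hJ₁.1
  have h3 := sum_bd G (K ∩ S) F₂ hJ₂.1
  rw [hJ₁.2, ← hJ₂.2, h3, h1, Finset.card_singleton] at h2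
  have hne : (F₂ ∩ cutF G (K ∩ S)).Nonempty := by
    rw [Finset.nonempty_iff_ne_empty]
    intro h
    rw [h] at h2
    simp at h2
  obtain ⟨e, he⟩ := hne
  obtain ⟨rfl, a, ha, haS⟩ := huniq F₂ hF₂ e₂ heF₂ he₂ e he
  exact hclosed F₂ hF₂ e heF₂ a ha haS v hv
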